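/- For every integer r ≥ 1 there exists a homogeneous polynomial H_r with integer coefficients in n² indeterminates Z_{ij} (1 ≤ i,j ≤ n), of degree n·r^n·(r−1)/2, with the following property: for every commutative ring R, every family of pairwise commuting derivations D₁,…,Dₙ ∈ Der(R) (i.e. [Dᵢ,Dⱼ] = 0 for all i,j), and every F = (f₁,…,fₙ) ∈ R^n, one has det W = H_r(JF), where W is the r^n × r^n matrix indexed by multiindices α,β ∈ [0,r−1]^n with entries W_{αβ} = D^α F^β, and JF is the n × n matrix with entries (JF)_{ij} = Dᵢ fⱼ. -/

import Mathlib

/-!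
Over `R ⊗[ℤ] R`, where the `D i` act on the left factor, put `g i = F i ⊗ 1 - 1 ⊗ F i`. Expanding
the monomials `g ^ β` by the binomial theorem, applying `D ^ α` and multiplying the two factors
together amounts to multiplying the Wronskian matrix `W` on the right by a matrix of determinant
`1`, which is unitriangular for the product order on multiindices. Multiplication
`μ : R ⊗ R → R` kills every `g i`, so only the terms of the Leibniz expansion in which each factor
of `g ^ β` is differentiated survive: the new entries vanish for `|α| < |β|`, and for `|α| = |β|`
they are permanents of the numbers `μ (D i (g j)) = D i (F j)`, with rows and columns repeated
according to `α` and `β`. Hence `det W` is the determinant of a block diagonal matrix of such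
permanents, which is the value of a universal polynomial at the Jacobian matrix.
-/

open scoped TensorProduct

section Determinants

variable {m R : Type*} [Fintype m] [DecidableEq m] [CommRing R]

theorem det_eq_det_of_blockTriangular {α : Type*} [LinearOrder α] {b : m → α} {M N : Matrix m m R}
    (hN : N.BlockTriangular b) (hMN : ∀ i j, b j ≤ b i → M i j = N i j) : M.det = N.det := by
  have hM : M.BlockTriangular b := fun i j hij => (hMN i j hij.le).trans (hN hij)
  rw [hM.det, hN.det]
  refine Finset.prod_congr rfl fun a _ => congrArg Matrix.det ?_
  ext ⟨i, hi⟩ ⟨j, hj⟩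
  exact hMN i j (hj.trans hi.symm).le

theorem isHomogeneous_det_of_rows {σ : Type*} {M : Matrix m m (MvPolynomial σ R)} {d : m → ℕ}
    (hM : ∀ i j, (M i j).IsHomogeneous (d i)) : M.det.IsHomogeneous (∑ i, d i) := by
  rw [← M.det_transpose, Matrix.det_apply]
  refine MvPolynomial.IsHomogeneous.sum _ _ _ fun τ _ => ?_
  have hprod : (∏ i, M.transpose (τ i) i).IsHomogeneous (∑ i, d i) :=
    MvPolynomial.IsHomogeneous.prod _ _ _ fun i _ => hM i (τ i)
  rcases Int.units_eq_one_or (Equiv.Perm.sign τ) with hτ | hτ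
  · simpa only [hτ, one_smul] using hprod
  · simpa only [hτ, Units.neg_smul, one_smul] using hprod.neg

end Determinants

section WordPermanent

variable {ι κ R : Type*} [DecidableEq κ] [CommSemiring R]

/-- The permanent of the matrix obtained from `Z` by taking its rows and columns, with repetition,
as listed in a word `l` and a multiset `s`. It is defined by Laplace expansion along the first row,
and is zero when `l` and `s` have different lengths. -/
def wordPermanent (Z : Matrix ι κ R) : List ι → Multiset κ → R
  | [], s => if s = 0 then 1 else 0
  | i :: l, s => (s.map fun j => Z i j * wordPermanent Z l (s.erase j)).sum

theorem wordPermanent_eq_zero_of_length_ne_card (Z : Matrix ι κ R) {l : List ι} {s : Multiset κ}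
    (h : l.length ≠ s.card) : wordPermanent Z l s = 0 := by
  induction l generalizing s with
  | nil => exact if_neg fun hs => h (by simp [hs])
  | cons i l ih =>
    refine Multiset.sum_eq_zero fun x hx => ?_
    obtain ⟨j, hj, rfl⟩ := Multiset.mem_map.mp hx
    have hcard := Multiset.card_erase_add_one hj
    rw [ih (by rw [List.length_cons] at h; omega), mul_zero]

theorem map_wordPermanent {S : Type*} [CommSemiring S] (φ : R →+* S) (Z : Matrix ι κ R)
    (l : List ι) (s : Multiset κ) :
    φ (wordPermanent Z l s) = wordPermanent (Z.map φ) l s := by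
  induction l generalizing s with
  | nil => simp only [wordPermanent, apply_ite φ, map_one, map_zero]
  | cons i l ih =>
    simp only [wordPermanent, map_multiset_sum, Multiset.map_map, Function.comp_def, map_mul, ih,
      Matrix.map_apply]

theorem isHomogeneous_wordPermanent {σ : Type*} {Z : Matrix ι κ (MvPolynomial σ R)}
    (hZ : ∀ i j, (Z i j).IsHomogeneous 1) (l : List ι) (s : Multiset κ) :
    (wordPermanent Z l s).IsHomogeneous l.length := by
  induction l generalizing s with
  | nil =>
    rw [wordPermanent]
    split_ifs
    · exact MvPolynomial.isHomogeneous_one _ _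
    · exact MvPolynomial.isHomogeneous_zero _ _ _
  | cons i l ih =>
    refine (MvPolynomial.homogeneousSubmodule σ R _).multiset_sum_mem _ fun x hx => ?_
    obtain ⟨j, -, rfl⟩ := Multiset.mem_map.mp hx
    rw [List.length_cons, add_comm]
    exact (hZ i j).mul (ih _)

end WordPermanent

section Leibniz

variable {ι κ k A : Type*} [DecidableEq κ] [CommSemiring k] [CommSemiring A] [Algebra k A]

theorem derivation_multiset_prod {M : Type*} [AddCommMonoid M] [Module k M] [Module A M]
    (d : Derivation k A M) (g : κ → A) (s : Multiset κ) :
    d (s.map g).prod = (s.map fun j => ((s.erase j).map g).prod • d (g j)).sum := by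
  induction s using Multiset.induction_on with
  | empty => simp
  | cons i s ih =>
    have herase : ∀ j ∈ s, (((i ::ₘ s).erase j).map g).prod • d (g j) =
        g i • ((s.erase j).map g).prod • d (g j) := fun j hj => by
      rw [Multiset.erase_cons_tail_of_mem hj, Multiset.map_cons, Multiset.prod_cons, mul_smul]
    rw [Multiset.map_cons, Multiset.prod_cons, d.leibniz, ih, Multiset.map_cons,
      Multiset.sum_cons, Multiset.erase_cons_head, Multiset.map_congr rfl herase, add_comm,
      Multiset.smul_sum, Multiset.map_map, Function.comp_def]

/-- The extra factor `a` is what makes the induction work: differentiating a factor `g j` turns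
`D i (g j)` into a part of the coefficient. -/
theorem map_prod_derivations_mul_prod {B : Type*} [CommSemiring B] (D : ι → Derivation k A A)
    (π : A →+* B) {g : κ → A} (hg : ∀ j, π (g j) = 0) {l : List ι} {s : Multiset κ}
    (hls : l.length ≤ s.card) (a : A) :
    π ((l.reverse.map fun i => (D i : Module.End k A)).prod (a * (s.map g).prod)) =
      π a * wordPermanent (Matrix.of fun i j => π (D i (g j))) l s := by
  induction l generalizing s a with
  | nil =>
    rcases eq_or_ne s 0 with rfl | hs
    · simp [wordPermanent]
    · obtain ⟨j, hj⟩ := Multiset.exists_mem_of_ne_zero hs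
      have hprod : π (s.map g).prod = 0 := by
        rw [map_multiset_prod, Multiset.map_map]
        exact Multiset.prod_eq_zero (Multiset.mem_map.mpr ⟨j, hj, hg j⟩)
      simp [wordPermanent, hprod, hs]
  | cons i l ih =>
    set L := (l.reverse.map fun i => (D i : Module.End k A)).prod with hL
    have hlt : l.length < s.card := hls
    have hcoeff : π (L ((s.map g).prod • D i a)) = 0 := by
      rw [smul_eq_mul, mul_comm, ih hlt.le, wordPermanent_eq_zero_of_length_ne_card _ hlt.ne,
        mul_zero]
    have hfactor : ∀ j ∈ s, π (L (a * (((s.erase j).map g).prod • D i (g j)))) =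
        π a * (π (D i (g j)) * wordPermanent (Matrix.of fun i j => π (D i (g j))) l
          (s.erase j)) := fun j hj => by
      have hcard := Multiset.card_erase_add_one hj
      rw [smul_eq_mul, mul_comm _ (D i (g j)), ← mul_assoc, ih (by omega), map_mul, mul_assoc]
    calc π (((i :: l).reverse.map fun i => (D i : Module.End k A)).prod (a * (s.map g).prod))
        = π (L (D i (a * (s.map g).prod))) := by simp [hL]
      _ = (s.map fun j => π (L (a * (((s.erase j).map g).prod • D i (g j))))).sum := by
        rw [Derivation.leibniz, map_add, map_add, hcoeff, add_zero, derivation_multiset_prod,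
          smul_eq_mul, ← Multiset.sum_map_mul_left, map_multiset_sum, map_multiset_sum,
          Multiset.map_map, Multiset.map_map]
        rfl
      _ = π a * wordPermanent (Matrix.of fun i j => π (D i (g j))) (i :: l) s := by
        rw [Multiset.map_congr rfl hfactor, Multiset.sum_map_mul_left]
        rfl

end Leibniz

section TranslationMatrix

variable {ι R : Type*} [Fintype ι] [CommSemiring R] {r : ℕ}

/-- The matrix, in the basis of monomials with all exponents less than `r`, of the substitution
`x i ↦ x i + c i`. Entries with `γ i > β i` for some `i` vanish through the binomial coefficient,
whatever the truncated exponent `β i - γ i`. -/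
def translationMatrix (c : ι → R) : Matrix (ι → Fin r) (ι → Fin r) R :=
  Matrix.of fun γ β => ∏ i, c i ^ (β i - γ i : ℕ) * (β i : ℕ).choose (γ i)

theorem translationMatrix_apply_of_not_le (c : ι → R) {γ β : ι → Fin r} (h : ¬γ ≤ β) :
    translationMatrix c γ β = 0 := by
  obtain ⟨i, hi⟩ := not_forall.mp h
  refine Finset.prod_eq_zero (Finset.mem_univ i) ?_
  rw [Nat.choose_eq_zero_of_lt (not_le.mp hi), Nat.cast_zero, mul_zero]

theorem map_translationMatrix_apply {S : Type*} [CommSemiring S] (φ : R →+* S) (c : ι → R)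
    (γ β : ι → Fin r) :
    φ (translationMatrix c γ β) = translationMatrix (fun i => φ (c i)) γ β := by
  simp [translationMatrix]

theorem add_pow_eq_sum_fin (x y : R) (b : Fin r) :
    (x + y) ^ (b : ℕ) = ∑ k : Fin r, x ^ (k : ℕ) * (y ^ (b - k : ℕ) * (b : ℕ).choose k) := by
  rw [add_pow, Fin.sum_univ_eq_sum_range (fun k => x ^ k * (y ^ (b - k : ℕ) * (b : ℕ).choose k)) r]
  simp only [mul_assoc]
  refine Finset.sum_subset (Finset.range_mono b.is_lt) fun k _ hk => ?_
  rw [Nat.choose_eq_zero_of_lt (by simpa using hk), Nat.cast_zero, mul_zero, mul_zero]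

theorem prod_add_pow_eq_sum_translationMatrix [DecidableEq ι] (x y : ι → R) (β : ι → Fin r) :
    ∏ i, (x i + y i) ^ (β i : ℕ) =
      ∑ γ : ι → Fin r, (∏ i, x i ^ (γ i : ℕ)) * translationMatrix y γ β := by
  simp only [add_pow_eq_sum_fin, Fintype.prod_sum, Finset.prod_mul_distrib, translationMatrix,
    Matrix.of_apply]

theorem det_translationMatrix {R : Type*} [CommRing R] [DecidableEq ι] (c : ι → R) :
    (translationMatrix c : Matrix (ι → Fin r) (ι → Fin r) R).det = 1 := by
  have hdeg : ∀ {γ β : ι → Fin r}, γ ≤ β → ∑ i, (β i : ℕ) ≤ ∑ i, (γ i : ℕ) → γ = β :=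
    fun {γ β} hle hsum => by
      have hval := (Finset.sum_eq_sum_iff_of_le fun i _ => Fin.le_def.mp (hle i)).mp
        ((Finset.sum_le_sum fun i _ => Fin.le_def.mp (hle i)).antisymm hsum)
      exact funext fun i => Fin.ext (hval i (Finset.mem_univ i))
  rw [← Matrix.det_one (n := ι → Fin r)]
  refine det_eq_det_of_blockTriangular (b := fun β => ∑ i, (β i : ℕ))
    Matrix.blockTriangular_one fun γ β hβγ => ?_
  rcases eq_or_ne γ β with rfl | hne
  · simp [translationMatrix]
  · rw [Matrix.one_apply_ne hne,
      translationMatrix_apply_of_not_le c fun hle => hne (hdeg hle hβγ)]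

end TranslationMatrix

section Tensor

variable {ι k R : Type*} [CommSemiring k] [CommRing R] [Algebra k R]

/-- The derivation `d ⊗ 1` of `R ⊗[k] S`, for which the elements `1 ⊗ s` are constants. -/
def derivationRTensor (S : Type*) [CommRing S] [Algebra k S] (d : Derivation k R R) :
    Derivation k (R ⊗[k] S) (R ⊗[k] S) :=
  Derivation.mk' ((d : R →ₗ[k] R).rTensor S) fun x y => by
    induction x with
    | zero => simp
    | add x x' hx hx' => simp only [add_mul, map_add, hx, hx', add_smul, smul_add]; abel
    | tmul a s =>
      induction y with
      | zero => simp
      | add y y' hy hy' => simp only [mul_add, map_add, hy, hy', add_smul, smul_add]; abel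
      | tmul b t => simp [TensorProduct.add_tmul, mul_comm t s]

theorem prod_map_derivationRTensor (S : Type*) [CommRing S] [Algebra k S]
    (D : ι → Derivation k R R) (l : List ι) :
    (l.map fun i => (derivationRTensor S (D i) : Module.End k (R ⊗[k] S))).prod =
      (l.map fun i => (D i : Module.End k R)).prod.rTensor S := by
  have h := map_list_prod (Module.End.rTensorAlgHom k R S)
    (l.map fun i => (D i : Module.End k R))
  rw [List.map_map] at h
  exact h.symm

theorem prod_tmul_one_sub_one_tmul_pow [Fintype ι] [DecidableEq ι] {r : ℕ} (F : ι → R)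
    (β : ι → Fin r) :
    ∏ i, (F i ⊗ₜ[k] (1 : R) - (1 : R) ⊗ₜ[k] F i) ^ (β i : ℕ) =
      ∑ γ : ι → Fin r, (∏ i, F i ^ (γ i : ℕ)) ⊗ₜ[k] translationMatrix (-F) γ β := by
  let left : R →ₐ[k] R ⊗[k] R := Algebra.TensorProduct.includeLeft
  let right : R →ₐ[k] R ⊗[k] R := Algebra.TensorProduct.includeRight
  calc ∏ i, (F i ⊗ₜ[k] (1 : R) - (1 : R) ⊗ₜ[k] F i) ^ (β i : ℕ)
      = ∏ i, (left (F i) + right ((-F) i)) ^ (β i : ℕ) := by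
        simp [left, right, TensorProduct.tmul_neg, sub_eq_add_neg]
    _ = ∑ γ : ι → Fin r, left (∏ i, F i ^ (γ i : ℕ)) * right (translationMatrix (-F) γ β) := by
        rw [prod_add_pow_eq_sum_translationMatrix]
        simp only [map_prod, map_pow]
        exact Finset.sum_congr rfl fun γ _ => congrArg _
          (map_translationMatrix_apply (right : R →+* R ⊗[k] R) (-F) γ β).symm
    _ = ∑ γ : ι → Fin r, (∏ i, F i ^ (γ i : ℕ)) ⊗ₜ[k] translationMatrix (-F) γ β := by
        simp only [left, right, Algebra.TensorProduct.includeLeft_apply,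
          Algebra.TensorProduct.includeRight_apply, Algebra.TensorProduct.tmul_mul_tmul,
          mul_one, one_mul]

theorem lmul'_rTensor_prod_sub_pow [Fintype ι] [DecidableEq ι] {r : ℕ} (T : Module.End k R)
    (F : ι → R) (β : ι → Fin r) :
    Algebra.TensorProduct.lmul' k
        (T.rTensor R (∏ i, (F i ⊗ₜ[k] (1 : R) - (1 : R) ⊗ₜ[k] F i) ^ (β i : ℕ))) =
      ∑ γ : ι → Fin r, T (∏ i, F i ^ (γ i : ℕ)) * translationMatrix (-F) γ β := by
  simp [prod_tmul_one_sub_one_tmul_pow]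

end Tensor

theorem coe_list_prod_end {k M : Type*} [Semiring k] [AddCommMonoid M] [Module k M]
    (l : List (Module.End k M)) :
    ⇑l.prod = (l.map fun T : Module.End k M => (T : M → M)).foldr (· ∘ ·) id := by
  induction l with
  | nil => rfl
  | cons T l ih => rw [List.prod_cons, List.map_cons, List.foldr_cons, ← ih]; rfl

section ExponentWord

variable {n : ℕ}

/-- The word `0 ⋯ 0 1 ⋯ 1 ⋯` in which the letter `i` occurs `a i` times: the list of the factors of
the monomial with exponents `a`. -/
def exponentWord (a : Fin n → ℕ) : List (Fin n) :=
  (List.ofFn fun i => List.replicate (a i) i).flatten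

theorem length_exponentWord (a : Fin n → ℕ) : (exponentWord a).length = ∑ i, a i := by
  simp [exponentWord, List.length_flatten, List.map_ofFn, Function.comp_def, List.sum_ofFn]

theorem prod_map_exponentWord {M : Type*} [Monoid M] (a : Fin n → ℕ) (f : Fin n → M) :
    ((exponentWord a).map f).prod = (List.ofFn fun i => f i ^ a i).prod := by
  simp [exponentWord, List.map_flatten, List.prod_flatten, List.map_ofFn, Function.comp_def]

end ExponentWord

section PermanentMatrix

variable {n : ℕ} {R : Type*} [CommSemiring R]

/-- The matrix of permanents to which the generalized Wronskian matrix of functions with Jacobian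
matrix `Z` reduces. The row word is reversed because `wordPermanent` expands along its first letter,
whereas the last derivation of a composite acts first. -/
def permanentMatrix (r : ℕ) (Z : Matrix (Fin n) (Fin n) R) :
    Matrix (Fin n → Fin r) (Fin n → Fin r) R :=
  Matrix.of fun α β =>
    wordPermanent Z (exponentWord fun i => (α i : ℕ)).reverse ↑(exponentWord fun i => (β i : ℕ))

theorem permanentMatrix_apply_of_sum_ne {r : ℕ} (Z : Matrix (Fin n) (Fin n) R)
    {α β : Fin n → Fin r} (h : ∑ i, (α i : ℕ) ≠ ∑ i, (β i : ℕ)) : permanentMatrix r Z α β = 0 :=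
  wordPermanent_eq_zero_of_length_ne_card Z (by simpa [length_exponentWord] using h)

/-- The integer polynomial `H_r` whose value at the Jacobian matrix is the generalized
Wronskian. -/
noncomputable def wronskianPolynomial (n r : ℕ) : MvPolynomial (Fin n × Fin n) ℤ :=
  (permanentMatrix r (Matrix.mvPolynomialX (Fin n) (Fin n) ℤ)).det

theorem aeval_wronskianPolynomial {R : Type*} [CommRing R] (r : ℕ) (Z : Matrix (Fin n) (Fin n) R) :
    MvPolynomial.aeval (fun ij : Fin n × Fin n => Z ij.1 ij.2) (wronskianPolynomial n r) =
      (permanentMatrix r Z).det := by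
  rw [wronskianPolynomial, AlgHom.map_det]
  congr 1
  ext α β
  refine (map_wordPermanent (MvPolynomial.aeval _).toRingHom _ _ _).trans ?_
  congr 1
  ext i j
  simp [Matrix.mvPolynomialX]

theorem sum_sum_multiindex (n r : ℕ) :
    ∑ α : Fin n → Fin r, ∑ i, (α i : ℕ) = n * r ^ n * (r - 1) / 2 := by
  have hcoord : ∀ i : Fin n, (∑ α : Fin n → Fin r, (α i : ℕ)) * 2 = r ^ n * (r - 1) := fun i => by
    have h := Fintype.sum_piFinset_apply (fun b : Fin r => (b : ℕ)) Finset.univ i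
    rw [Fintype.piFinset_univ, Finset.card_univ, Fintype.card_fin, Fintype.card_fin,
      Fin.sum_univ_eq_sum_range (fun b => b), smul_eq_mul] at h
    rw [h, mul_assoc, Finset.sum_range_id_mul_two, ← mul_assoc, pow_sub_one_mul i.pos.ne']
  refine (Nat.div_eq_of_eq_mul_left two_pos ?_).symm
  rw [Finset.sum_comm, Finset.sum_mul, Finset.sum_congr rfl fun i _ => hcoord i]
  simp [mul_assoc]

theorem isHomogeneous_wronskianPolynomial (n r : ℕ) :
    (wronskianPolynomial n r).IsHomogeneous (n * r ^ n * (r - 1) / 2) := by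
  rw [← sum_sum_multiindex]
  refine isHomogeneous_det_of_rows fun α β => ?_
  have h := isHomogeneous_wordPermanent (Z := Matrix.mvPolynomialX (Fin n) (Fin n) ℤ)
    (fun i j => MvPolynomial.isHomogeneous_X ℤ (i, j)) (exponentWord fun i => (α i : ℕ)).reverse
    ↑(exponentWord fun i => (β i : ℕ))
  rwa [List.length_reverse, length_exponentWord] at h

end PermanentMatrix

section GeneralizedWronskian

variable {n : ℕ} {k R : Type*} [CommSemiring k] [CommRing R] [Algebra k R]

/-- The generalized Wronskian matrix `(D ^ α F ^ β)`, with `α` and `β` ranging over the multiindices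
with all entries less than `r`; the derivations are composed in the order `D 0 ∘ D 1 ∘ ⋯`. -/
def generalizedWronskian (r : ℕ) (D : Fin n → Derivation k R R) (F : Fin n → R) :
    Matrix (Fin n → Fin r) (Fin n → Fin r) R :=
  Matrix.of fun α β =>
    (List.ofFn fun i => (D i : Module.End k R) ^ (α i : ℕ)).prod (∏ i, F i ^ (β i : ℕ))

theorem generalizedWronskian_eq_of_iterate (r : ℕ) (D : Fin n → Derivation k R R) (F : Fin n → R) :
    generalizedWronskian r D F = Matrix.of fun α β : Fin n → Fin r =>
      (List.ofFn fun i => (⇑(D i))^[(α i : ℕ)]).foldr (· ∘ ·) id (∏ i, F i ^ (β i : ℕ)) := by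
  ext α β
  simp [generalizedWronskian, coe_list_prod_end, List.map_ofFn, Function.comp_def,
    Module.End.coe_pow]

theorem generalizedWronskian_mul_translationMatrix_apply {r : ℕ} (D : Fin n → Derivation k R R)
    (F : Fin n → R) {α β : Fin n → Fin r} (hαβ : ∑ i, (α i : ℕ) ≤ ∑ i, (β i : ℕ)) :
    (generalizedWronskian r D F * translationMatrix (-F) : Matrix _ _ R) α β =
      permanentMatrix r (Matrix.of fun i j => D i (F j)) α β := by
  let g : Fin n → R ⊗[k] R := fun i => F i ⊗ₜ 1 - 1 ⊗ₜ F i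
  let u := exponentWord fun i => (α i : ℕ)
  let v := exponentWord fun i => (β i : ℕ)
  let μ : R ⊗[k] R →ₐ[k] R := Algebra.TensorProduct.lmul' k
  have hμg : ∀ j, μ (g j) = 0 := fun j => by simp [μ, g]
  have hμDg : ∀ i j, μ (derivationRTensor R (D i) (g j)) = D i (F j) := fun i j => by
    simp [μ, g, derivationRTensor]
  calc (generalizedWronskian r D F * translationMatrix (-F) : Matrix _ _ R) α β
      = μ ((u.map fun i => (D i : Module.End k R)).prod.rTensor R (∏ i, g i ^ (β i : ℕ))) := by
        rw [lmul'_rTensor_prod_sub_pow, prod_map_exponentWord]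
        rfl
    _ = μ ((u.reverse.reverse.map fun i =>
          (derivationRTensor R (D i) : Module.End k (R ⊗[k] R))).prod
            (1 * ((v : Multiset (Fin n)).map g).prod)) := by
        rw [List.reverse_reverse, prod_map_derivationRTensor, one_mul, Multiset.map_coe,
          Multiset.prod_coe, prod_map_exponentWord _ g, List.prod_ofFn]
    _ = permanentMatrix r (Matrix.of fun i j => D i (F j)) α β := by
        have hlen : u.reverse.length ≤ (v : Multiset (Fin n)).card := by
          simpa [u, v, length_exponentWord] using hαβ
        have h := map_prod_derivations_mul_prod (fun i => derivationRTensor R (D i))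
          (μ : R ⊗[k] R →+* R) hμg hlen 1
        simpa [hμDg, permanentMatrix] using h

theorem det_generalizedWronskian (r : ℕ) (D : Fin n → Derivation k R R) (F : Fin n → R) :
    (generalizedWronskian r D F).det =
      (permanentMatrix r (Matrix.of fun i j => D i (F j))).det := by
  rw [← mul_one (generalizedWronskian r D F).det, ← det_translationMatrix (-F), ← Matrix.det_mul]
  refine det_eq_det_of_blockTriangular (b := fun α => OrderDual.toDual (∑ i, (α i : ℕ)))
    (fun α β h => ?_) fun α β h => ?_
  · exact permanentMatrix_apply_of_sum_ne _ (OrderDual.toDual_lt_toDual.mp h).ne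
  · exact generalizedWronskian_mul_translationMatrix_apply D F (OrderDual.toDual_le_toDual.mp h)

end GeneralizedWronskian

theorem stmt3_general.{u} (n r : ℕ) :
    ∃ H : MvPolynomial (Fin n × Fin n) ℤ,
      H.IsHomogeneous (n * r ^ n * (r - 1) / 2) ∧
      ∀ (R : Type u) (_ : CommRing R) (D : Fin n → Derivation ℤ R R) (F : Fin n → R),
        (Matrix.of fun α β : Fin n → Fin r =>
            (List.ofFn fun i : Fin n => (⇑(D i))^[(α i : ℕ)]).foldr (· ∘ ·) id
              (∏ i : Fin n, F i ^ (β i : ℕ))).det =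
          MvPolynomial.aeval (fun ij : Fin n × Fin n => D ij.1 (F ij.2)) H := by
  refine ⟨wronskianPolynomial n r, isHomogeneous_wronskianPolynomial n r, fun R _ D F => ?_⟩
  rw [← generalizedWronskian_eq_of_iterate, det_generalizedWronskian, ← aeval_wronskianPolynomial]
  rfl

/-- Generalized Wronskians: for every `r ≥ 1` there is a homogeneous integer polynomial
`H_r` in the `n²` indeterminates `Z_{ij}` of degree `n·rⁿ·(r−1)/2` such that for any
commutative ring `R`, any pairwise commuting derivations `D₁, …, Dₙ` of `R` and any
`F ∈ Rⁿ`, the generalized Wronskian `det ‖D^α F^β‖_{α,β ∈ [0,r−1]ⁿ}` equals `H_r(JF)`. -/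
theorem stmt3.{u} (n r : ℕ) (hr : 1 ≤ r) :
    ∃ H : MvPolynomial (Fin n × Fin n) ℤ,
      H.IsHomogeneous (n * r ^ n * (r - 1) / 2) ∧
      ∀ (R : Type u) (_ : CommRing R) (D : Fin n → Derivation ℤ R R),
        (∀ i j : Fin n, ∀ x : R, D i (D j x) = D j (D i x)) →
        ∀ F : Fin n → R,
          (Matrix.of fun α β : Fin n → Fin r =>
              (List.ofFn fun i : Fin n => (⇑(D i))^[(α i : ℕ)]).foldr (· ∘ ·) id
                (∏ i : Fin n, F i ^ (β i : ℕ))).det =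
            MvPolynomial.aeval (fun ij : Fin n × Fin n => D ij.1 (F ij.2)) H :=
  let ⟨H, hH, hdet⟩ := stmt3_general n r
  ⟨H, hH, fun R _ D _ F => hdet R _ D F⟩
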